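/- Let q be a power of an odd prime p and let d := gcd(3, q+1). Every irreducible complex character of the Borel subgroup B of SU_3(q) of degree (q²−1)/d whose character field is not contained in ℝ has unitary discriminant 1. -/

import Mathlib

open Matrix

noncomputable section

namespace Paper

/-- The character of a matrix representation. -/
def charOf {G : Type} [Group G] {n : ℕ} (ρ : G →* GL (Fin n) ℂ) : G → ℂ :=
  fun g => Matrix.trace ((ρ g : Matrix (Fin n) (Fin n) ℂ))

/-- Irreducibility of a complex matrix representation. -/
def IsIrredRep {G : Type} [Group G] {n : ℕ} (ρ : G →* GL (Fin n) ℂ) : Prop :=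
  0 < n ∧ ∀ W : Submodule ℂ (Fin n → ℂ),
    (∀ (g : G), ∀ v ∈ W, (ρ g : Matrix (Fin n) (Fin n) ℂ).mulVec v ∈ W) → W = ⊥ ∨ W = ⊤

/-- `χ` is an irreducible complex character of `G`. -/
def IsIrrChar {G : Type} [Group G] (χ : G → ℂ) : Prop :=
  ∃ (n : ℕ) (ρ : G →* GL (Fin n) ℂ), IsIrredRep ρ ∧ χ = charOf ρ

/-- The character field `ℚ(χ)`, as a subfield of `ℂ`. -/
def charField {G : Type} [Group G] (χ : G → ℂ) : Subfield ℂ :=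
  Subfield.closure (Set.range χ)

/-- The subfield of real numbers inside `ℂ`. -/
def realsIn : Subfield ℂ := Subfield.closure (Set.range ((↑) : ℝ → ℂ))

/-- The character field of `χ` is not contained in `ℝ`. -/
def NotReal {G : Type} [Group G] (χ : G → ℂ) : Prop := ¬ charField χ ≤ realsIn

/-- `χ` has unitary discriminant `d`. -/
def HasUnitaryDisc {G : Type} [Group G] (χ : G → ℂ) (d : ℂ) : Prop :=
  ∀ (n : ℕ) (ρ : G →* GL (Fin n) ℂ),
    χ = charOf ρ →
    (∀ g i j, ((ρ g : Matrix (Fin n) (Fin n) ℂ)) i j ∈ charField χ) →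
    ∀ H : Matrix (Fin n) (Fin n) ℂ,
      (∀ i j, H i j ∈ charField χ) →
      IsUnit H.det →
      H.conjTranspose = H →
      (∀ g, ((ρ g : Matrix (Fin n) (Fin n) ℂ)).conjTranspose * H *
        (ρ g : Matrix (Fin n) (Fin n) ℂ) = H) →
      ∃ z ∈ charField χ, z ≠ 0 ∧
        (-1 : ℂ) ^ (n * (n - 1) / 2) * H.det = d * (z * (starRingEnd ℂ) z)

/-- `χ` has orthogonal discriminant `d`. -/
def HasOrthDisc {G : Type} [Group G] (χ : G → ℂ) (d : ℂ) : Prop :=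
  ∀ (n : ℕ) (ρ : G →* GL (Fin n) ℂ),
    χ = charOf ρ →
    (∀ g i j, ((ρ g : Matrix (Fin n) (Fin n) ℂ)) i j ∈ charField χ) →
    ∀ H : Matrix (Fin n) (Fin n) ℂ,
      (∀ i j, H i j ∈ charField χ) →
      IsUnit H.det →
      H.transpose = H →
      (∀ g, ((ρ g : Matrix (Fin n) (Fin n) ℂ)).transpose * H *
        (ρ g : Matrix (Fin n) (Fin n) ℂ) = H) →
      ∃ z ∈ charField χ, z ≠ 0 ∧
        (-1 : ℂ) ^ (n * (n - 1) / 2) * H.det = d * z ^ 2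

/-- `χ` is a rational character. -/
def IsRationalChar {G : Type} [Group G] (χ : G → ℂ) : Prop :=
  ∀ g, ∃ r : ℚ, χ g = (r : ℂ)

/-- `χ` is the character of a representation over `ℚ`. -/
def RealizableOverQ {G : Type} [Group G] (χ : G → ℂ) : Prop :=
  ∃ (n : ℕ) (ρ : G →* GL (Fin n) ℂ), χ = charOf ρ ∧
    ∀ g i j, ∃ r : ℚ, ((ρ g : Matrix (Fin n) (Fin n) ℂ)) i j = (r : ℂ)

end Paper

namespace Paper

variable (p k : ℕ) (F : Type) [Field F] [Fintype F] [ExpChar F p]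

/-- The Gram matrix `Ω` (anti-diagonal ones). -/
def Om : Matrix (Fin 3) (Fin 3) F :=
  Matrix.of fun i j => if (i : ℕ) + (j : ℕ) = 2 then 1 else 0

/-- Entrywise `q`-power Frobenius `Φ` on `3×3` matrices, where `q = p^k`. -/
def Phi : Matrix (Fin 3) (Fin 3) F →+* Matrix (Fin 3) (Fin 3) F :=
  (iterateFrobenius F p k).mapMatrix

/-- The special unitary group `SU₃(q) = {g ∈ SL₃(F_{q²}) : Φ(g)ᵀ·Ω·g = Ω}`. -/
def SU3 : Subgroup (Matrix.SpecialLinearGroup (Fin 3) F) where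
  carrier := {g | (Phi p k F g.val)ᵀ * Om F * g.val = Om F}
  one_mem' := by
    show (Phi p k F (1 : Matrix.SpecialLinearGroup (Fin 3) F).val)ᵀ * Om F *
        (1 : Matrix.SpecialLinearGroup (Fin 3) F).val = Om F
    simp
  mul_mem' := by
    intro a b ha hb
    show (Phi p k F (a.val * b.val))ᵀ * Om F * (a.val * b.val) = Om F
    have ha' : (Phi p k F a.val)ᵀ * Om F * a.val = Om F := ha
    have hb' : (Phi p k F b.val)ᵀ * Om F * b.val = Om F := hb
    calc (Phi p k F (a.val * b.val))ᵀ * Om F * (a.val * b.val)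
        = (Phi p k F b.val)ᵀ * ((Phi p k F a.val)ᵀ * Om F * a.val) * b.val := by
          rw [_root_.map_mul, Matrix.transpose_mul]; simp only [Matrix.mul_assoc]
      _ = (Phi p k F b.val)ᵀ * Om F * b.val := by rw [ha']
      _ = Om F := hb'
  inv_mem' := by
    intro a ha
    show (Phi p k F (a⁻¹).val)ᵀ * Om F * (a⁻¹).val = Om F
    have ha' : (Phi p k F a.val)ᵀ * Om F * a.val = Om F := ha
    have h1 : a.val * (a⁻¹).val = 1 := by
      rw [← Matrix.SpecialLinearGroup.coe_mul, mul_inv_cancel,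
        Matrix.SpecialLinearGroup.coe_one]
    nth_rewrite 1 [← ha']
    calc (Phi p k F (a⁻¹).val)ᵀ * ((Phi p k F a.val)ᵀ * Om F * a.val) * (a⁻¹).val
        = (Phi p k F a.val * Phi p k F (a⁻¹).val)ᵀ * Om F * (a.val * (a⁻¹).val) := by
          rw [Matrix.transpose_mul]; simp only [Matrix.mul_assoc]
      _ = Om F := by rw [← _root_.map_mul, h1, _root_.map_one, Matrix.transpose_one,
            Matrix.one_mul, Matrix.mul_one]

end Paper

namespace Paper

variable (p k : ℕ) (F : Type) [Field F] [Fintype F] [ExpChar F p]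

/-- The Borel subgroup of `SU₃(q)`: the upper triangular matrices in `SU₃(q)`. -/
def Borel : Subgroup ↥(SU3 p k F) where
  carrier := {g | Matrix.BlockTriangular ((g : Matrix.SpecialLinearGroup (Fin 3) F) :
    Matrix (Fin 3) (Fin 3) F) id}
  one_mem' := by
    show Matrix.BlockTriangular ((1 : Matrix.SpecialLinearGroup (Fin 3) F) :
      Matrix (Fin 3) (Fin 3) F) id
    rw [Matrix.SpecialLinearGroup.coe_one]
    exact Matrix.blockTriangular_one
  mul_mem' := by
    intro a b ha hb
    exact Matrix.BlockTriangular.mul ha hb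
  inv_mem' := by
    intro a ha
    show Matrix.BlockTriangular (((a⁻¹ : ↥(SU3 p k F)) : Matrix.SpecialLinearGroup (Fin 3) F) :
      Matrix (Fin 3) (Fin 3) F) id
    have hcoe : (((a⁻¹ : ↥(SU3 p k F)) : Matrix.SpecialLinearGroup (Fin 3) F) :
        Matrix (Fin 3) (Fin 3) F)
        = (((a : ↥(SU3 p k F)) : Matrix.SpecialLinearGroup (Fin 3) F) :
          Matrix (Fin 3) (Fin 3) F)⁻¹ := by
      rw [show ((a⁻¹ : ↥(SU3 p k F)) : Matrix.SpecialLinearGroup (Fin 3) F)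
        = ((a : ↥(SU3 p k F)) : Matrix.SpecialLinearGroup (Fin 3) F)⁻¹ from rfl]
      rw [Matrix.SpecialLinearGroup.coe_inv, Matrix.inv_def,
        ((a : ↥(SU3 p k F)) : Matrix.SpecialLinearGroup (Fin 3) F).2]
      simp
    rw [hcoe]
    haveI : Invertible (((a : ↥(SU3 p k F)) : Matrix.SpecialLinearGroup (Fin 3) F) :
        Matrix (Fin 3) (Fin 3) F) := by
      apply Matrix.invertibleOfIsUnitDet
      rw [((a : ↥(SU3 p k F)) : Matrix.SpecialLinearGroup (Fin 3) F).2]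
      exact isUnit_one
    exact Matrix.blockTriangular_inv_of_blockTriangular ha

end Paper

namespace Paper

theorem det_mem' (L : Subfield ℂ) {m : ℕ} (D : Matrix (Fin m) (Fin m) ℂ)
    (h : ∀ i j, D i j ∈ L) : D.det ∈ L := by
  rw [Matrix.det_apply]
  refine sum_mem fun σ _ => ?_
  rw [Units.smul_def, zsmul_eq_mul]
  exact mul_mem (intCast_mem _ _) (prod_mem fun i _ => h _ _)

theorem mul_mem_mat (L : Subfield ℂ) {a b c : Type*} [Fintype b] (A : Matrix a b ℂ)
    (B : Matrix b c ℂ) (hA : ∀ i j, A i j ∈ L) (hB : ∀ i j, B i j ∈ L) (i j) :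
    (A * B) i j ∈ L := by
  rw [Matrix.mul_apply]
  exact sum_mem fun x _ => mul_mem (hA _ _) (hB _ _)

theorem exists_basis {L : Type*} [Field L] [CharZero L] {n : ℕ} (G g : Matrix (Fin n) (Fin n) L)
    (q : ℕ) (hq : q ≠ 0) (hG : G * G = ((q : L) ^ 2) • (1 : Matrix (Fin n) (Fin n) L))
    (hg : IsUnit g.det) (hgG : g * G = -(G * g)) :
    ∃ (m : ℕ) (A : Matrix (Fin n) (Fin m) L) (e : Fin m ⊕ Fin m ≃ Fin n),
      G * A = (q : L) • A ∧ ((Matrix.fromCols A (g * A)).submatrix id e.symm).det ≠ 0 := by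
  have hqL : (q : L) ≠ 0 := by exact_mod_cast hq
  have hGG : ∀ v, G *ᵥ (G *ᵥ v) = ((q : L) ^ 2) • v := by
    intro v; rw [Matrix.mulVec_mulVec, hG, Matrix.smul_mulVec, Matrix.one_mulVec]
  have hgg : ∀ v, g *ᵥ (G *ᵥ v) = - (G *ᵥ (g *ᵥ v)) := by
    intro v; rw [Matrix.mulVec_mulVec, hgG, Matrix.neg_mulVec, Matrix.mulVec_mulVec]
  let W : Submodule L (Fin n → L) := Module.End.eigenspace (Matrix.toLin' G) (q : L)
  have hW : ∀ v, v ∈ W ↔ G *ᵥ v = (q : L) • v := by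
    intro v; simp [W]
  let gE : (Fin n → L) ≃ₗ[L] (Fin n → L) :=
    Matrix.toLinearEquiv' g (Matrix.invertibleOfIsUnitDet g hg)
  have hgE : ∀ v, gE v = g *ᵥ v := fun v => rfl
  have hW' : ∀ v, v ∈ W.map (gE : (Fin n → L) →ₗ[L] (Fin n → L)) ↔ G *ᵥ v = -((q : L) • v) := by
    intro v
    rw [Submodule.mem_map]
    constructor
    · rintro ⟨w, hw, rfl⟩
      have := (hW w).1 hw
      have h2 := hgg w
      rw [this, Matrix.mulVec_smul] at h2
      simp only [LinearEquiv.coe_coe, hgE]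
      rw [h2, neg_neg]
    · intro h
      refine ⟨gE.symm v, ?_, by simp⟩
      rw [hW]
      apply gE.injective
      rw [map_smul, LinearEquiv.apply_symm_apply, hgE, hgg, ← hgE, LinearEquiv.apply_symm_apply, h,
        neg_neg]
  have hc : IsCompl W (W.map (gE : (Fin n → L) →ₗ[L] (Fin n → L))) := by
    constructor
    · rw [Submodule.disjoint_def]
      intro v h1 h2
      rw [hW] at h1
      rw [hW', h1] at h2
      have h3 : (2 * (q : L)) • v = 0 := by
        rw [two_mul, add_smul]; nth_rewrite 1 [h2]; simp
      rcases smul_eq_zero.1 h3 with h | h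
      · exact absurd h (mul_ne_zero two_ne_zero hqL)
      · exact h
    · rw [codisjoint_iff, eq_top_iff]
      intro v _
      rw [Submodule.mem_sup]
      refine ⟨(1/2 : L) • v + (1 / (2 * q) : L) • (G *ᵥ v), ?_,
        (1/2 : L) • v - (1 / (2 * q) : L) • (G *ᵥ v), ?_, ?_⟩
      · rw [hW, Matrix.mulVec_add, Matrix.mulVec_smul, Matrix.mulVec_smul, hGG]
        ext i; simp; field_simp; ring
      · rw [hW', Matrix.mulVec_sub, Matrix.mulVec_smul, Matrix.mulVec_smul, hGG]
        ext i; simp; field_simp; ring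
      · ext i; simp; ring
  let b := Module.finBasis L W
  let B := (b.prod (b.map (gE.submoduleMap W))).map (Submodule.prodEquivOfIsCompl _ _ hc)
  let e := B.indexEquiv (Pi.basisFun L (Fin n))
  refine ⟨Module.finrank L W, Matrix.of fun i j => (b j : Fin n → L) i, e, ?_, ?_⟩
  · ext i j
    have := congrFun ((hW _).1 (b j).2) i
    simpa [Matrix.mul_apply, Matrix.mulVec, dotProduct] using this
  · have h1 : ((Matrix.fromCols (Matrix.of fun i j => (b j : Fin n → L) i)
      (g * (Matrix.of fun i j => (b j : Fin n → L) i))).submatrix id e.symm)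
      = (Pi.basisFun L (Fin n)).toMatrix (B.reindex e) := by
      ext i j
      obtain ⟨x, rfl⟩ := e.surjective j
      rw [Module.Basis.toMatrix_apply]
      rcases x with x | x
      · simp [B]
      · simp [B, hgE, Matrix.mul_apply, Matrix.mulVec, dotProduct]
    rw [h1]
    have := (Pi.basisFun L (Fin n)).toMatrix_mul_toMatrix_flip (B.reindex e)
    have h2 := congrArg Matrix.det this
    rw [Matrix.det_mul, Matrix.det_one] at h2
    intro h0
    rw [h0, zero_mul] at h2
    exact zero_ne_one h2

theorem final_disc (L : Subfield ℂ) (hconj : ∀ x ∈ L, star x ∈ L) {n : ℕ}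
    (H G g : Matrix (Fin n) (Fin n) ℂ) (hHL : ∀ i j, H i j ∈ L) (hGL : ∀ i j, G i j ∈ L)
    (hgL : ∀ i j, g i j ∈ L) (hH : Hᴴ = H) (hdet : IsUnit H.det)
    (hGH : Gᴴ * H = H * G) (hgH : gᴴ * H * g = H) (hg : IsUnit g.det)
    (q : ℕ) (hq : q ≠ 0) (hG : G * G = ((q : ℂ) ^ 2) • (1 : Matrix (Fin n) (Fin n) ℂ))
    (hgG : g * G = -(G * g)) :
    ∃ z ∈ L, z ≠ 0 ∧ H.det = z * (starRingEnd ℂ) z := by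
  let G0 : Matrix (Fin n) (Fin n) L := Matrix.of fun i j => ⟨G i j, hGL i j⟩
  let g0 : Matrix (Fin n) (Fin n) L := Matrix.of fun i j => ⟨g i j, hgL i j⟩
  have hG0 : G0.map L.subtype = G := by ext i j; rfl
  have hg0 : g0.map L.subtype = g := by ext i j; rfl
  have inj : Function.Injective (fun M : Matrix (Fin n) (Fin n) L => M.map L.subtype) :=
    Matrix.map_injective L.subtype.injective
  obtain ⟨m, A0, e, hA0, hC0⟩ := exists_basis G0 g0 q hq
    (by
      apply inj
      simp only
      rw [Matrix.map_mul, hG0, hG]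
      ext i j
      by_cases hij : i = j
      · subst hij; simp
      · simp [hij])
    (by
      rw [isUnit_iff_ne_zero] at hg ⊢
      intro h0
      apply hg
      rw [← hg0]
      have := RingHom.map_det L.subtype g0
      rw [h0, map_zero] at this
      exact this.symm)
    (by
      apply inj
      simp only
      rw [Matrix.map_mul, hG0, hg0, hgG, ← hG0, ← hg0, ← Matrix.map_mul]
      ext i j; simp)
  set A : Matrix (Fin n) (Fin m) ℂ := A0.map L.subtype with hA
  have hGA : G * A = (q : ℂ) • A := by
    rw [← hG0, hA, ← Matrix.map_mul, hA0]; ext i j; simp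
  have hAL : ∀ i j, A i j ∈ L := fun i j => (A0 i j).2
  set C : Matrix (Fin n) (Fin n) ℂ := (Matrix.fromCols A (g * A)).submatrix id e.symm with hC
  have hCdet : C.det = L.subtype ((Matrix.fromCols A0 (g0 * A0)).submatrix id e.symm).det := by
    rw [RingHom.map_det]
    congr 1
    ext i j
    obtain ⟨x, rfl⟩ := e.surjective j
    rcases x with x | x
    · simp [hC, hA]
    · simp [hC, hA, Matrix.mul_apply, ← hg0]
  have hCne : C.det ≠ 0 := by
    rw [hCdet]; simpa using hC0
  have hCL : C.det ∈ L := by rw [hCdet]; exact Subtype.property _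
  set D : Matrix (Fin m) (Fin m) ℂ := Aᴴ * H * A with hD
  have hDL : D.det ∈ L := by
    apply det_mem'
    apply mul_mem_mat _ _ _ _ hAL
    apply mul_mem_mat _ _ _ _ hHL
    intro i j
    exact hconj _ (hAL _ _)
  have hDreal : star D.det = D.det := by
    rw [← Matrix.det_conjTranspose]
    congr 1
    rw [hD]; simp only [Matrix.conjTranspose_mul, Matrix.conjTranspose_conjTranspose, hH,
      Matrix.mul_assoc]
  have hqC : (q : ℂ) ≠ 0 := by exact_mod_cast hq
  have hGgA : G * (g * A) = -((q : ℂ) • (g * A)) := by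
    rw [← Matrix.mul_assoc, show G * g = -(g * G) by rw [hgG, neg_neg], Matrix.neg_mul,
      Matrix.mul_assoc, hGA, Matrix.mul_smul]
  have hX : Aᴴ * H * (g * A) = 0 := by
    have h1 : (G * A)ᴴ * H * (g * A) = (q : ℂ) • (Aᴴ * H * (g * A)) := by
      rw [hGA]; simp
    have h2 : (G * A)ᴴ * H * (g * A) = -((q : ℂ) • (Aᴴ * H * (g * A))) := by
      rw [Matrix.conjTranspose_mul, Matrix.mul_assoc Aᴴ, hGH, ← Matrix.mul_assoc Aᴴ,
        Matrix.mul_assoc _ G, hGgA]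
      simp
    have h3 : (2 * (q : ℂ)) • (Aᴴ * H * (g * A)) = 0 := by
      rw [two_mul, add_smul]
      nth_rewrite 1 [← h1]
      rw [h2]; simp
    rcases smul_eq_zero.1 h3 with h | h
    · exact absurd h (by simp [hq])
    · exact h
  have hX' : (g * A)ᴴ * H * A = 0 := by
    have := congrArg Matrix.conjTranspose hX
    simpa only [Matrix.conjTranspose_mul, Matrix.conjTranspose_conjTranspose, hH,
      Matrix.mul_assoc, Matrix.conjTranspose_zero] using this
  have hY : (g * A)ᴴ * H * (g * A) = D := by
    rw [hD]
    nth_rewrite 2 [← hgH]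
    simp only [Matrix.conjTranspose_mul, Matrix.mul_assoc]
  have hmain : Cᴴ * H * C = (Matrix.fromBlocks D 0 0 D).submatrix e.symm e.symm := by
    have h1 : (Matrix.fromCols A (g * A))ᴴ * H * (Matrix.fromCols A (g * A))
        = Matrix.fromBlocks D 0 0 D := by
      rw [Matrix.conjTranspose_fromCols_eq_fromRows_conjTranspose, Matrix.fromRows_mul,
        Matrix.fromRows_mul_fromCols, hX, hX', hY]
    rw [← h1]
    ext i j
    simp only [hC, Matrix.mul_apply, Matrix.submatrix_apply, Matrix.conjTranspose_apply, id]
  have hd := congrArg Matrix.det hmain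
  rw [Matrix.det_submatrix_equiv_self, Matrix.det_fromBlocks_zero₂₁, Matrix.det_mul,
    Matrix.det_mul, Matrix.det_conjTranspose] at hd
  have hCs : star C.det ≠ 0 := by simpa using hCne
  have hDne : D.det ≠ 0 := by
    intro h0
    rw [h0, zero_mul] at hd
    exact (mul_ne_zero (mul_ne_zero hCs hdet.ne_zero) hCne) hd
  refine ⟨D.det / C.det, div_mem hDL hCL, div_ne_zero hDne hCne, ?_⟩
  rw [map_div₀]
  change _ = D.det / C.det * (star D.det / star C.det)
  rw [hDreal, div_mul_div_comm, ← hd]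
  field_simp


theorem gauss_sq {F : Type} [Field F] [Fintype F] [DecidableEq F] (q : ℕ) (hF : Fintype.card F = q ^ 2)
    (h2 : ringChar F ≠ 2) (hm1 : quadraticChar F (-1) = 1)
    {n : ℕ} (r : F → Matrix (Fin n) (Fin n) ℂ) (r0 : r 0 = 1) (radd : ∀ a b, r (a + b) = r a * r b)
    (rsum : ∑ a, r a = 0) :
    (∑ a, (quadraticChar F a : ℂ) • r a) * (∑ a, (quadraticChar F a : ℂ) • r a)
      = ((q : ℂ) ^ 2) • (1 : Matrix (Fin n) (Fin n) ℂ) := by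
  have hJ1 : ∑ x : F, quadraticChar F x * quadraticChar F (1 - x) = -1 := by
    have := jacobiSum_nontrivial_inv (quadraticChar_ne_one h2)
    rw [hm1, (quadraticChar_isQuadratic F).inv] at this
    exact this
  have hJ : ∀ c : F, c ≠ 0 → ∑ x : F, quadraticChar F x * quadraticChar F (c - x) = -1 := by
    intro c hc
    rw [← hJ1, ← Equiv.sum_comp (Equiv.mulLeft₀ c hc)]
    refine Finset.sum_congr rfl fun x _ => ?_
    rw [Equiv.mulLeft₀_apply, show c - c * x = c * (1 - x) by ring, map_mul, map_mul]
    linear_combination (quadraticChar F x * quadraticChar F (1 - x)) * quadraticChar_sq_one hc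
  have hJ0 : ∑ x : F, quadraticChar F x * quadraticChar F (0 - x) = (q : ℤ) ^ 2 - 1 := by
    have : ∀ x : F, quadraticChar F x * quadraticChar F (0 - x) = 1 - if x = 0 then 1 else 0 := by
      intro x
      by_cases hx : x = 0
      · simp [hx]
      · rw [zero_sub, ← neg_one_mul x, map_mul, hm1, one_mul, ← sq, quadraticChar_sq_one hx]
        simp [hx]
    simp_rw [this]
    rw [Finset.sum_sub_distrib]
    simp [hF]
  have h : ∀ c : F, ∑ x : F, (quadraticChar F x : ℂ) * (quadraticChar F (c - x) : ℂ)
      = (if c = 0 then (q : ℂ) ^ 2 else 0) - 1 := by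
    intro c
    have h1 : ∑ x : F, quadraticChar F x * quadraticChar F (c - x)
        = (if c = 0 then (q : ℤ) ^ 2 else 0) - 1 := by
      by_cases hc : c = 0
      · rw [hc, hJ0]; simp
      · rw [hJ c hc]; simp [hc]
    exact_mod_cast congrArg (Int.cast : ℤ → ℂ) h1
  have : (∑ a, (quadraticChar F a : ℂ) • r a) * (∑ a, (quadraticChar F a : ℂ) • r a)
      = ∑ c, (∑ x : F, (quadraticChar F x : ℂ) * (quadraticChar F (c - x) : ℂ)) • r c := by
    simp_rw [Finset.sum_smul]
    rw [Finset.sum_comm, Finset.sum_mul]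
    refine Finset.sum_congr rfl fun x _ => ?_
    rw [Finset.mul_sum, ← Equiv.sum_comp (Equiv.subRight x)]
    refine Finset.sum_congr rfl fun c _ => ?_
    rw [Equiv.subRight_apply, smul_mul_smul_comm, ← radd]
    congr 2; ring
  rw [this]
  simp_rw [h, sub_smul]
  rw [Finset.sum_sub_distrib]
  simp [rsum, r0, ite_smul]

section general
variable {G : Type} [Group G] {n : ℕ}

/-- the average over a subgroup -/
noncomputable def avg (N : Subgroup G) [Fintype N] (ρ : G →* GL (Fin n) ℂ) :
    Matrix (Fin n) (Fin n) ℂ :=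
  (Fintype.card N : ℂ)⁻¹ • ∑ x : N, (ρ x : Matrix (Fin n) (Fin n) ℂ)

theorem card_ne (N : Subgroup G) [Fintype N] : (Fintype.card N : ℂ) ≠ 0 := by
  exact_mod_cast Fintype.card_ne_zero

theorem mul_avg (N : Subgroup G) [Fintype N] (ρ : G →* GL (Fin n) ℂ) (y : N) :
    (ρ y : Matrix (Fin n) (Fin n) ℂ) * avg N ρ = avg N ρ := by
  unfold avg
  rw [Matrix.mul_smul, Finset.mul_sum]
  congr 1
  rw [← Equiv.sum_comp (Equiv.mulLeft y) (fun x : N => (ρ x : Matrix (Fin n) (Fin n) ℂ))]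
  refine Finset.sum_congr rfl fun x _ => ?_
  simp

theorem avg_mul_of (N : Subgroup G) [Fintype N] (ρ : G →* GL (Fin n) ℂ) 
    (X : Matrix (Fin n) (Fin n) ℂ)
    (hX : ∀ y ∈ N, (ρ y : Matrix (Fin n) (Fin n) ℂ) * X = X) : avg N ρ * X = X := by
  unfold avg
  rw [Matrix.smul_mul, Finset.sum_mul, Finset.sum_congr rfl fun (x : N) _ => hX x x.2]
  simp [← Nat.cast_smul_eq_nsmul ℂ, smul_smul]

theorem avg_idem (N : Subgroup G) [Fintype N] (ρ : G →* GL (Fin n) ℂ) :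
    avg N ρ * avg N ρ = avg N ρ := avg_mul_of N ρ _ fun y hy => mul_avg N ρ ⟨y, hy⟩

theorem idem_zero (P : Matrix (Fin n) (Fin n) ℂ) (hP : P * P = P) (ht : P.trace = 0) : P = 0 := by
  have h : IsIdempotentElem (Matrix.toLin' P) := by
    unfold IsIdempotentElem
    rw [Module.End.mul_eq_comp, ← Matrix.toLin'_mul, hP]
  have := LinearMap.IsIdempotentElem.eq_zero_of_trace_eq_zero h (by
    rw [Matrix.trace_toLin'_eq]; exact ht)
  simpa using this

theorem idem_nat (P : Matrix (Fin n) (Fin n) ℂ) (hP : P * P = P) : ∃ m : ℕ, P.trace = m := by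
  have h : IsIdempotentElem (Matrix.toLin' P) := by
    unfold IsIdempotentElem
    rw [Module.End.mul_eq_comp, ← Matrix.toLin'_mul, hP]
  have h2 := (LinearMap.isProj_range_iff_isIdempotentElem _).2 h
  exact ⟨Module.finrank ℂ (LinearMap.range (Matrix.toLin' P)), by
    rw [← Matrix.trace_toLin'_eq, h2.trace]⟩

theorem trace_avg (N : Subgroup G) [Fintype N] (ρ : G →* GL (Fin n) ℂ) :
    (avg N ρ).trace = (Fintype.card N : ℂ)⁻¹ * ∑ x : N, charOf ρ x := by
  unfold avg charOf
  rw [Matrix.trace_smul, Matrix.trace_sum, smul_eq_mul]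

theorem avg_zero_transfer (N : Subgroup G) [Fintype N] (ρ σ : G →* GL (Fin n) ℂ)
    (h : charOf ρ = charOf σ) (hs : avg N σ = 0) : avg N ρ = 0 := by
  apply idem_zero _ (avg_idem N ρ)
  rw [trace_avg, h, ← trace_avg, hs, Matrix.trace_zero]

theorem triv_of_avg (N : Subgroup G) [Fintype N] (ρ : G →* GL (Fin n) ℂ) (h : avg N ρ = 1) :
    ∀ y ∈ N, (ρ y : Matrix (Fin n) (Fin n) ℂ) = 1 := by
  intro y hy
  have := mul_avg N ρ ⟨y, hy⟩
  rwa [h, Matrix.mul_one] at this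

theorem avg_of_triv (N : Subgroup G) [Fintype N] (ρ : G →* GL (Fin n) ℂ)
    (h : ∀ y ∈ N, (ρ y : Matrix (Fin n) (Fin n) ℂ) = 1) : avg N ρ = 1 := by
  have := avg_mul_of N ρ (1 : Matrix (Fin n) (Fin n) ℂ) (fun y hy => by rw [h y hy, one_mul])
  rwa [Matrix.mul_one] at this

theorem triv_transfer (N : Subgroup G) [Fintype N] (ρ σ : G →* GL (Fin n) ℂ)
    (h : charOf ρ = charOf σ) (hs : ∀ y ∈ N, (σ y : Matrix (Fin n) (Fin n) ℂ) = 1) :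
    ∀ y ∈ N, (ρ y : Matrix (Fin n) (Fin n) ℂ) = 1 := by
  apply triv_of_avg
  have hi := avg_idem N ρ
  have := idem_zero (1 - avg N ρ) (by
    rw [Matrix.mul_sub, Matrix.sub_mul, Matrix.sub_mul, hi]; simp) (by
    rw [Matrix.trace_sub, trace_avg, h, ← trace_avg, avg_of_triv N σ hs, sub_self])
  exact (sub_eq_zero.1 this).symm

theorem avg_dichotomy (N : Subgroup G) [N.Normal] [Fintype N] (σ : G →* GL (Fin n) ℂ)
    (hs : IsIrredRep σ) :
    avg N σ = 0 ∨ ∀ y ∈ N, (σ y : Matrix (Fin n) (Fin n) ℂ) = 1 := by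
  let W : Submodule ℂ (Fin n → ℂ) :=
    { carrier := {v | ∀ y ∈ N, (σ y : Matrix (Fin n) (Fin n) ℂ) *ᵥ v = v}
      add_mem' := by
        intro a b ha hb y hy
        rw [Matrix.mulVec_add, ha y hy, hb y hy]
      zero_mem' := by intro y hy; simp
      smul_mem' := by
        intro c a ha y hy
        rw [Matrix.mulVec_smul, ha y hy] }
  have hW : ∀ v, v ∈ W ↔ ∀ y ∈ N, (σ y : Matrix (Fin n) (Fin n) ℂ) *ᵥ v = v := fun v => Iff.rfl
  rcases hs.2 W (by
    intro g v hv y hy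
    have h1 := hv (g⁻¹ * y * g) (by simpa using Subgroup.Normal.conj_mem' ‹_› y hy g)
    have h2 : (σ y : Matrix (Fin n) (Fin n) ℂ) * (σ g : Matrix (Fin n) (Fin n) ℂ)
        = (σ g : Matrix (Fin n) (Fin n) ℂ) * (σ (g⁻¹ * y * g) : Matrix (Fin n) (Fin n) ℂ) := by
      rw [← Units.val_mul, ← Units.val_mul, ← map_mul, ← map_mul]
      congr 2; group
    rw [Matrix.mulVec_mulVec, h2, ← Matrix.mulVec_mulVec, h1]) with h | h
  · left
    have : ∀ v, avg N σ *ᵥ v = 0 := by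
      intro v
      have : avg N σ *ᵥ v ∈ W := by
        rw [hW]; intro y hy
        rw [Matrix.mulVec_mulVec, mul_avg N σ ⟨y, hy⟩]
      rw [h] at this
      simpa using this
    ext i j
    have := congrFun (this (Pi.single j 1)) i
    simpa using this
  · right
    intro y hy
    have : ∀ v, (σ y : Matrix (Fin n) (Fin n) ℂ) *ᵥ v = v := by
      intro v
      have : v ∈ W := by rw [h]; trivial
      exact (hW v).1 this y hy
    ext i j
    have := congrFun (this (Pi.single j 1)) i
    simpa [Matrix.one_apply, Pi.single_apply] using this

theorem irred_comm (σ : G →* GL (Fin n) ℂ) (hs : IsIrredRep σ)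
    (hc : ∀ g h, σ g * σ h = σ h * σ g) : n = 1 := by
  have : Nonempty (Fin n) := ⟨⟨0, hs.1⟩⟩
  have hsc : ∀ g, ∃ c : ℂ, ∀ v, (σ g : Matrix (Fin n) (Fin n) ℂ) *ᵥ v = c • v := by
    intro g
    obtain ⟨c, hcv⟩ := Module.End.exists_eigenvalue
      (Matrix.toLin' (σ g : Matrix (Fin n) (Fin n) ℂ))
    refine ⟨c, ?_⟩
    have hE : ∀ v, v ∈ Module.End.eigenspace
        (Matrix.toLin' (σ g : Matrix (Fin n) (Fin n) ℂ)) c ↔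
        (σ g : Matrix (Fin n) (Fin n) ℂ) *ᵥ v = c • v := by
      intro v; rw [Module.End.mem_eigenspace_iff, Matrix.toLin'_apply]
    rcases hs.2 (Module.End.eigenspace
        (Matrix.toLin' (σ g : Matrix (Fin n) (Fin n) ℂ)) c) (by
      intro h v hv
      rw [hE] at hv ⊢
      rw [Matrix.mulVec_mulVec, ← Units.val_mul, hc, Units.val_mul, ← Matrix.mulVec_mulVec, hv,
        Matrix.mulVec_smul]) with h | h
    · exact absurd h hcv
    · intro v
      rw [← hE, h]; trivial
  let v : Fin n → ℂ := fun _ => 1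
  have hv : v ≠ 0 := fun h => one_ne_zero (congrFun h ⟨0, hs.1⟩)
  rcases hs.2 (Submodule.span ℂ {v}) (by
    intro g w hw
    obtain ⟨c, hc⟩ := hsc g
    rw [hc]
    exact Submodule.smul_mem _ _ hw) with h | h
  · rw [Submodule.span_singleton_eq_bot] at h; exact absurd h hv
  · have h1 := finrank_span_singleton (K := ℂ) hv
    rw [h, finrank_top, Module.finrank_fin_fun] at h1
    exact h1

theorem trace_zero_of_avg (N : Subgroup G) [Fintype N] (σ : G →* GL (Fin n) ℂ)
    (h0 : avg N σ = 0) (x : G) (hx : ∀ z ∈ N, ∃ w, w * x = x * z * w) : charOf σ x = 0 := by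
  have h1 : ∀ z ∈ N, charOf σ (x * z) = charOf σ x := by
    intro z hz
    obtain ⟨w, hw⟩ := hx z hz
    have : x * z = w * x * w⁻¹ := by rw [hw]; group
    unfold charOf
    rw [this, map_mul, map_mul, Units.val_mul, Units.val_mul, Matrix.trace_mul_cycle,
      ← Units.val_mul, ← Units.val_mul, ← map_mul, ← map_mul, inv_mul_cancel, one_mul]
  have h2 : ∑ z : N, charOf σ (x * z) = 0 := by
    have : (σ x : Matrix (Fin n) (Fin n) ℂ) * avg N σ = 0 := by rw [h0, mul_zero]
    unfold avg at this
    rw [Matrix.mul_smul, smul_eq_zero] at this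
    rcases this with h | h
    · exact absurd h (inv_ne_zero (card_ne N))
    · rw [Finset.mul_sum] at h
      have := congrArg Matrix.trace h
      rw [Matrix.trace_sum, Matrix.trace_zero] at this
      rw [← this]
      refine Finset.sum_congr rfl fun z _ => ?_
      simp [charOf]
  rw [Finset.sum_congr rfl fun z _ => h1 z.1 z.2] at h2
  simp only [Finset.sum_const, nsmul_eq_mul, mul_eq_zero] at h2
  rcases h2 with h | h
  · exact absurd h (by simp)
  · exact h

theorem dvd_of_trace_zero (σ : G →* GL (Fin n) ℂ) (p : ℕ) (hp : p ≠ 0) (x : G) (hx : x ^ p = 1)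
    (ht : ∀ i, 0 < i → i < p → charOf σ (x ^ i) = 0) : p ∣ n := by
  set X := (σ x : Matrix (Fin n) (Fin n) ℂ) with hX
  have hXp : X ^ p = 1 := by
    rw [hX, ← Units.val_pow_eq_pow_val, ← map_pow, hx, map_one, Units.val_one]
  set S := ∑ i ∈ Finset.range p, X ^ i with hS
  have hXS : X * S = S := by
    have h1 := Finset.sum_range_succ (fun i => X ^ i) p
    have h2 := Finset.sum_range_succ' (fun i => X ^ i) p
    rw [h1, hXp, pow_zero] at h2
    have h3 := add_right_cancel h2
    rw [hS, Finset.mul_sum]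
    simp_rw [← pow_succ']
    exact h3.symm
  have hXiS : ∀ i, X ^ i * S = S := by
    intro i
    induction i with
    | zero => simp
    | succ i ih => rw [pow_succ, mul_assoc, hXS, ih]
  have hpC : (p : ℂ) ≠ 0 := by exact_mod_cast hp
  have hSS : S * S = (p : ℂ) • S := by
    nth_rewrite 1 [hS]
    rw [Finset.sum_mul, Finset.sum_congr rfl fun i _ => hXiS i]
    simp [← Nat.cast_smul_eq_nsmul ℂ]
  obtain ⟨m, hm⟩ := idem_nat ((p : ℂ)⁻¹ • S) (by
    rw [Matrix.smul_mul, Matrix.mul_smul, hSS, smul_smul, smul_smul]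
    congr 1
    field_simp)
  have hSt : S.trace = n := by
    rw [hS, Matrix.trace_sum, Finset.sum_eq_single 0]
    · simp
    · intro i hi h0
      have := ht i (Nat.pos_of_ne_zero h0) (Finset.mem_range.1 hi)
      rw [← this, charOf, map_pow, Units.val_pow_eq_pow_val]
    · intro h; exact absurd (Finset.mem_range.2 (Nat.pos_of_ne_zero hp)) h
  rw [Matrix.trace_smul, hSt, smul_eq_mul] at hm
  refine ⟨m, ?_⟩
  have : (n : ℂ) = p * m := by rw [← hm]; field_simp
  exact_mod_cast this

end general
end Paper

namespace Paper
section borel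
set_option linter.unusedSectionVars false
variable (p k : ℕ) (F : Type) [Field F] [ExpChar F p]

/-- the underlying matrix -/
def bm (g : ↥(Borel p k F)) : Matrix (Fin 3) (Fin 3) F :=
  ((g : ↥(SU3 p k F)) : Matrix.SpecialLinearGroup (Fin 3) F).val

theorem bm_mul (g h : ↥(Borel p k F)) : bm p k F (g * h) = bm p k F g * bm p k F h := rfl
theorem bm_one : bm p k F 1 = 1 := rfl
theorem bm_inj {g h : ↥(Borel p k F)} (e : bm p k F g = bm p k F h) : g = h := by
  apply Subtype.ext; apply Subtype.ext; apply Subtype.ext; exact e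

theorem bm_low (g : ↥(Borel p k F)) {i j : Fin 3} (h : j < i) : bm p k F g i j = 0 := g.2 h

theorem bm_unit (g : ↥(Borel p k F)) :
    ((bm p k F g).map (iterateFrobenius F p k))ᵀ * Om F * bm p k F g = Om F := g.1.2

/-- The two diagonal blocks. -/
def blk : ↥(Borel p k F) →* Matrix (Fin 2) (Fin 2) F × Matrix (Fin 2) (Fin 2) F where
  toFun g := (!![bm p k F g 0 0, bm p k F g 0 1; 0, bm p k F g 1 1],
    !![bm p k F g 1 1, bm p k F g 1 2; 0, bm p k F g 2 2])
  map_one' := by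
    rw [bm_one]; simp [Matrix.one_fin_two]
  map_mul' g h := by
    rw [bm_mul]
    have h10 := bm_low p k F h (i := 1) (j := 0) (by decide)
    have h20 := bm_low p k F h (i := 2) (j := 0) (by decide)
    have h21 := bm_low p k F h (i := 2) (j := 1) (by decide)
    have g10 := bm_low p k F g (i := 1) (j := 0) (by decide)
    have g20 := bm_low p k F g (i := 2) (j := 0) (by decide)
    have g21 := bm_low p k F g (i := 2) (j := 1) (by decide)
    simp [Matrix.mul_apply, Fin.sum_univ_three, h10, h20, h21, g10, g20, g21]

/-- The diagonal. -/
def dg : ↥(Borel p k F) →* F × F × F where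
  toFun g := (bm p k F g 0 0, bm p k F g 1 1, bm p k F g 2 2)
  map_one' := by
    rw [bm_one]; simp
  map_mul' g h := by
    rw [bm_mul]
    have h10 := bm_low p k F h (i := 1) (j := 0) (by decide)
    have h20 := bm_low p k F h (i := 2) (j := 0) (by decide)
    have h21 := bm_low p k F h (i := 2) (j := 1) (by decide)
    have g10 := bm_low p k F g (i := 1) (j := 0) (by decide)
    have g20 := bm_low p k F g (i := 2) (j := 0) (by decide)
    have g21 := bm_low p k F g (i := 2) (j := 1) (by decide)
    simp [Matrix.mul_apply, Fin.sum_univ_three, h10, h20, h21, g10, g20, g21]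

/-- Constructor. -/
def mkB (M : Matrix (Fin 3) (Fin 3) F) (h1 : M.det = 1)
    (h2 : (M.map (iterateFrobenius F p k))ᵀ * Om F * M = Om F)
    (h3 : ∀ i j : Fin 3, j < i → M i j = 0) : ↥(Borel p k F) :=
  ⟨⟨⟨M, h1⟩, h2⟩, fun i j h => h3 i j h⟩

theorem Om_eq : Om F = !![0,0,1;0,1,0;1,0,0] := by
  ext i j; fin_cases i <;> fin_cases j <;> simp [Om]

/-- unipotent elements -/
def uu (h2 : (2 : F) ≠ 0) (hφ : ∀ x, iterateFrobenius F p k (iterateFrobenius F p k x) = x)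
    (a : F) : ↥(Borel p k F) :=
  mkB p k F !![1, a, -(a * iterateFrobenius F p k a) / 2; 0, 1, -iterateFrobenius F p k a; 0, 0, 1]
    (by simp [Matrix.det_fin_three])
    (by
      rw [Om_eq]
      ext i j
      fin_cases i <;> fin_cases j <;>
        simp [Matrix.mul_apply, Fin.sum_univ_three, hφ, map_ofNat]
      field_simp; ring)
    (by
      intro i j h
      fin_cases i <;> fin_cases j <;> simp_all)

/-- torus elements -/
def hh (hφ : ∀ x, iterateFrobenius F p k (iterateFrobenius F p k x) = x)
    (s : F) (hs : s ≠ 0) : ↥(Borel p k F) :=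
  mkB p k F !![s, 0, 0; 0, iterateFrobenius F p k s / s, 0; 0, 0, (iterateFrobenius F p k s)⁻¹]
    (by
      have : iterateFrobenius F p k s ≠ 0 := by simpa using hs
      simp only [Matrix.det_fin_three]; simp; field_simp)
    (by
      have : iterateFrobenius F p k s ≠ 0 := by simpa using hs
      rw [Om_eq]
      ext i j
      fin_cases i <;> fin_cases j <;>
        simp [Matrix.mul_apply, Fin.sum_univ_three, hφ] <;> field_simp)
    (by
      intro i j h
      fin_cases i <;> fin_cases j <;> simp_all)

variable (h2 : (2 : F) ≠ 0) (hφ : ∀ x, iterateFrobenius F p k (iterateFrobenius F p k x) = x)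

theorem bm_uu (a : F) : bm p k F (uu p k F h2 hφ a) =
  !![1, a, -(a * iterateFrobenius F p k a) / 2; 0, 1, -iterateFrobenius F p k a; 0, 0, 1] := rfl

theorem bm_hh (s : F) (hs : s ≠ 0) : bm p k F (hh p k F hφ s hs) =
  !![s, 0, 0; 0, iterateFrobenius F p k s / s, 0; 0, 0, (iterateFrobenius F p k s)⁻¹] := rfl

theorem bm_eta (g : ↥(Borel p k F)) : bm p k F g = !![bm p k F g 0 0, bm p k F g 0 1, bm p k F g 0 2;
    0, bm p k F g 1 1, bm p k F g 1 2; 0, 0, bm p k F g 2 2] := by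
  ext i j
  fin_cases i <;> fin_cases j <;> simp <;> exact bm_low p k F g (by decide)

theorem uu_mul_fixed (a b : F) (ha : iterateFrobenius F p k a = a)
    (hb : iterateFrobenius F p k b = b) :
    uu p k F h2 hφ a * uu p k F h2 hφ b = uu p k F h2 hφ (a + b) := by
  apply bm_inj
  rw [bm_mul, bm_uu, bm_uu, bm_uu]
  ext i j
  fin_cases i <;> fin_cases j <;>
    simp [Matrix.mul_apply, Fin.sum_univ_three, ha, hb]
  · ring
  · field_simp; ring

theorem uu_zero : uu p k F h2 hφ 0 = 1 := by
  apply bm_inj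
  rw [bm_uu, bm_one]
  ext i j
  fin_cases i <;> fin_cases j <;> simp

theorem uu_pow (i : ℕ) : uu p k F h2 hφ 1 ^ i = uu p k F h2 hφ (i : F) := by
  induction i with
  | zero => simp [uu_zero]
  | succ i ih => rw [pow_succ, ih, uu_mul_fixed _ _ _ _ _ _ _ (by simp) (by simp)]; simp

theorem mem_dg {x : ↥(Borel p k F)} : x ∈ (dg p k F).ker ↔
    bm p k F x 0 0 = 1 ∧ bm p k F x 1 1 = 1 ∧ bm p k F x 2 2 = 1 := by
  rw [MonoidHom.mem_ker]; simp [dg, Prod.ext_iff]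

theorem mem_blk {x : ↥(Borel p k F)} : x ∈ (blk p k F).ker ↔
    bm p k F x 0 0 = 1 ∧ bm p k F x 1 1 = 1 ∧ bm p k F x 2 2 = 1 ∧ bm p k F x 0 1 = 0 ∧
      bm p k F x 1 2 = 0 := by
  rw [MonoidHom.mem_ker]
  simp only [blk, MonoidHom.coe_mk, OneHom.coe_mk, Prod.mk_eq_one, ← Matrix.ext_iff,
    Fin.forall_fin_two]
  simp
  tauto

/-- `x ∈ U` agrees with `u(x₀₁)` modulo the centre. -/
theorem blk_uu (x : ↥(Borel p k F)) (hx : x ∈ (dg p k F).ker) :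
    blk p k F x = blk p k F (uu p k F h2 hφ (bm p k F x 0 1)) := by
  obtain ⟨h00, h11, h22⟩ := (mem_dg p k F).1 hx
  have hu := congrFun (congrFun (bm_unit p k F x) 1) 2
  rw [Om_eq, bm_eta] at hu
  simp [Matrix.mul_apply, Fin.sum_univ_three, h00, h11, h22] at hu
  have h12 : bm p k F x 1 2 = - iterateFrobenius F p k (bm p k F x 0 1) := by
    linear_combination hu
  simp only [blk, MonoidHom.coe_mk, OneHom.coe_mk, bm_uu]
  simp [h00, h11, h22, h12]

theorem uu_mem (a : F) : uu p k F h2 hφ a ∈ (dg p k F).ker := by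
  rw [mem_dg, bm_uu]; simp

theorem blk_uu_mul (a b : F) : blk p k F (uu p k F h2 hφ (a + b))
    = blk p k F (uu p k F h2 hφ a * uu p k F h2 hφ b) := by
  rw [blk_uu p k F h2 hφ _ (mul_mem (uu_mem p k F h2 hφ a) (uu_mem p k F h2 hφ b)), bm_mul, bm_uu,
    bm_uu]
  simp [Matrix.mul_apply, Fin.sum_univ_three, add_comm]

theorem blk_hh (s : F) (hs : s ≠ 0) (a : F) :
    blk p k F (hh p k F hφ s hs * uu p k F h2 hφ a)
      = blk p k F (uu p k F h2 hφ (s * s * a / iterateFrobenius F p k s) * hh p k F hφ s hs) := by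
  have hs' : iterateFrobenius F p k s ≠ 0 := by simpa using hs
  simp only [blk, MonoidHom.coe_mk, OneHom.coe_mk, bm_mul, bm_uu, bm_hh]
  simp [Matrix.mul_apply, Fin.sum_univ_three, hφ]
  constructor <;> field_simp

theorem comm_surj (a : F) (ha : iterateFrobenius F p k a = a) (ha0 : a ≠ 0)
    (z : ↥(Borel p k F)) (hz : z ∈ (blk p k F).ker) :
    ∃ w, w * uu p k F h2 hφ a = uu p k F h2 hφ a * z * w := by
  obtain ⟨h00, h11, h22, h01, h12⟩ := (mem_blk p k F).1 hz
  have hu := congrFun (congrFun (bm_unit p k F z) 2) 2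
  rw [Om_eq, bm_eta] at hu
  simp [Matrix.mul_apply, Fin.sum_univ_three, h00, h11, h22, h01, h12] at hu
  have hb : iterateFrobenius F p k (bm p k F z 0 2) = - bm p k F z 0 2 := by
    linear_combination hu
  refine ⟨uu p k F h2 hφ (-(bm p k F z 0 2) / (2 * a)), ?_⟩
  apply bm_inj
  rw [bm_mul, bm_mul, bm_mul, bm_uu, bm_uu, bm_eta p k F z]
  simp only [h00, h11, h22, h01, h12]
  ext i j
  fin_cases i <;> fin_cases j <;>
    simp [Matrix.mul_apply, Fin.sum_univ_three, ha, hb]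
  · ring
  · rw [show iterateFrobenius F p k 2 = 2 from map_ofNat _ 2]
    field_simp; ring
  · ring

end borel
end Paper

namespace Paper

theorem numerics (p k q n : ℕ) (hp : p.Prime) (hpodd : Odd p) (hk : 0 < k) (hq : q = p ^ k)
    (hn : n = (q ^ 2 - 1) / Nat.gcd 3 (q + 1)) : 8 ∣ n ∧ ¬ p ∣ n := by
  have hqodd : Odd q := hq ▸ hpodd.pow
  have hq1 : 1 ≤ q := hqodd.pos
  have hq2 : 1 ≤ q ^ 2 := Nat.one_le_pow _ _ hq1
  have hfac : q ^ 2 - 1 = (q + 1) * (q - 1) := by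
    have := Nat.sq_sub_sq q 1
    simpa using this
  have hg : Nat.gcd 3 (q + 1) ∣ q ^ 2 - 1 := by
    rw [hfac]; exact Dvd.dvd.mul_right (Nat.gcd_dvd_right _ _) _
  have hmul : Nat.gcd 3 (q + 1) * n = q ^ 2 - 1 := by rw [hn]; exact Nat.mul_div_cancel' hg
  constructor
  · have h8 : 8 ∣ q ^ 2 - 1 := Nat.eight_dvd_sq_sub_one_of_odd hqodd
    rw [← hmul] at h8
    refine Nat.Coprime.dvd_of_dvd_mul_left ?_ h8
    exact Nat.Coprime.coprime_dvd_right (Nat.gcd_dvd_left 3 (q + 1)) (by norm_num)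
  · intro h
    have h1 : p ∣ q ^ 2 - 1 := hmul ▸ Dvd.dvd.mul_left h _
    have h2 : p ∣ q ^ 2 := by
      rw [hq]; exact dvd_pow (dvd_pow_self p hk.ne') two_ne_zero
    have h3 := (Nat.dvd_sub h2 h1)
    rw [Nat.sub_sub_self hq2] at h3
    exact hp.one_lt.ne' (Nat.dvd_one.1 h3)

theorem conj_closed {G : Type} [Group G] {n : ℕ} (ρ : G →* GL (Fin n) ℂ)
    (H : Matrix (Fin n) (Fin n) ℂ) (hdet : IsUnit H.det)
    (hinv : ∀ g, ((ρ g : Matrix (Fin n) (Fin n) ℂ)).conjTranspose * H *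
        (ρ g : Matrix (Fin n) (Fin n) ℂ) = H) :
    ∀ x ∈ charField (charOf ρ), star x ∈ charField (charOf ρ) := by
  have hc : ∀ g, star (charOf ρ g) = charOf ρ g⁻¹ := by
    intro g
    have h1 : (ρ g : Matrix (Fin n) (Fin n) ℂ)ᴴ * H
        = H * (ρ g⁻¹ : Matrix (Fin n) (Fin n) ℂ) := by
      have h3 : (ρ g : Matrix (Fin n) (Fin n) ℂ) * (ρ g⁻¹ : Matrix (Fin n) (Fin n) ℂ) = 1 := by
        rw [← Units.val_mul, ← map_mul, mul_inv_cancel, map_one, Units.val_one]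
      rw [← hinv g, Matrix.mul_assoc _ _ (ρ g⁻¹ : Matrix (Fin n) (Fin n) ℂ), h3, Matrix.mul_one,
        hinv g]
    have h2 : (ρ g : Matrix (Fin n) (Fin n) ℂ)ᴴ
        = H * (ρ g⁻¹ : Matrix (Fin n) (Fin n) ℂ) * H⁻¹ := by
      rw [← h1, Matrix.mul_assoc, Matrix.mul_nonsing_inv _ hdet, Matrix.mul_one]
    unfold charOf
    rw [← Matrix.trace_conjTranspose, h2, Matrix.trace_mul_cycle, Matrix.nonsing_inv_mul _ hdet,
      Matrix.one_mul]
  have hle : charField (charOf ρ) ≤ (charField (charOf ρ)).comap (starRingEnd ℂ) := by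
    apply Subfield.closure_le.2
    rintro _ ⟨g, rfl⟩
    change star (charOf ρ g) ∈ charField (charOf ρ)
    rw [hc]
    exact Subfield.subset_closure ⟨_, rfl⟩
  intro x hx
  exact hle hx

/-- every irreducible character of the Borel subgroup of `SU₃(q)`,
`q` odd, of degree `(q²-1)/gcd(3,q+1)` with non-real character field has unitary
discriminant `1`. -/
theorem stmt13 (p k q : ℕ) (hp : p.Prime) (hpodd : Odd p) (hk : 0 < k) (hq : q = p ^ k)
    (F : Type) [Field F] [Fintype F] [ExpChar F p] (hF : Fintype.card F = q ^ 2)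
    (χ : ↥(Borel p k F) → ℂ) (hχ : IsIrrChar χ)
    (hdeg : χ 1 = (((q ^ 2 - 1) / Nat.gcd 3 (q + 1) : ℕ) : ℂ))
    (hnr : NotReal χ) :
    HasUnitaryDisc χ 1 := by
  classical
  have hch : CharP F p := by
    rcases ‹ExpChar F p› with _ | _
    · exact absurd hp Nat.not_prime_one
    · assumption
  have hrc : ringChar F = p := ringChar.eq F p
  have hp2 : p ≠ 2 := by rintro rfl; exact absurd hpodd (by decide)
  have hrc2 : ringChar F ≠ 2 := hrc ▸ hp2
  have h2 : (2 : F) ≠ 0 := Ring.two_ne_zero hrc2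
  have hφd : ∀ x : F, iterateFrobenius F p k x = x ^ q := by
    intro x; rw [iterateFrobenius_def, hq]
  have hφ : ∀ x, iterateFrobenius F p k (iterateFrobenius F p k x) = x := by
    intro x; rw [hφd, hφd, ← pow_mul, ← sq, ← hF, FiniteField.pow_card]
  have hqodd : Odd q := hq ▸ hpodd.pow
  obtain ⟨n, σ, hσ, rfl⟩ := hχ
  have hn1 : n = (q ^ 2 - 1) / Nat.gcd 3 (q + 1) := by
    have : charOf σ 1 = n := by simp [charOf]
    rw [this] at hdeg
    exact_mod_cast hdeg
  obtain ⟨h8, hpn⟩ := numerics p k q n hp hpodd hk hq hn1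
  -- the two normal subgroups
  have : Fintype (blk p k F).ker := Fintype.ofFinite _
  have : Fintype (dg p k F).ker := Fintype.ofFinite _
  have hZ : ∀ y ∈ (blk p k F).ker, (σ y : Matrix (Fin n) (Fin n) ℂ) = 1 := by
    rcases avg_dichotomy (blk p k F).ker σ hσ with h | h
    · exfalso
      apply hpn
      apply dvd_of_trace_zero σ p hp.ne_zero (uu p k F h2 hφ 1)
      · rw [uu_pow, CharP.cast_eq_zero, uu_zero]
      · intro i hi hip
        rw [uu_pow]
        apply trace_zero_of_avg _ σ h
        intro z hz
        apply comm_surj p k F h2 hφ _ (by simp) _ z hz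
        rw [Ne, CharP.cast_eq_zero_iff F p]
        intro hd
        exact absurd (Nat.le_of_dvd hi hd) (by omega)
    · exact h
  have hU : avg (dg p k F).ker σ = 0 := by
    rcases avg_dichotomy (dg p k F).ker σ hσ with h | h
    · exact h
    · exfalso
      have hone := irred_comm σ hσ (by
        intro x y
        have hm : (y * x)⁻¹ * (x * y) ∈ (dg p k F).ker := by
          rw [MonoidHom.mem_ker, map_mul, map_mul, mul_comm (dg p k F x), ← map_mul, ← map_mul,
            inv_mul_cancel, map_one]
        have := h _ hm
        have h1 : σ ((y * x)⁻¹ * (x * y)) = 1 := Units.ext this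
        rw [map_mul, map_inv, inv_mul_eq_one] at h1
        rw [← map_mul, ← map_mul, h1])
      rw [hone] at h8
      omega
  intro n' ρ hρ hρL H hHL hHdet hHH hinv
  have hnn : n = n' := by
    have h1 : charOf σ 1 = n := by simp [charOf]
    have h3 : charOf ρ 1 = n' := by simp [charOf]
    rw [hρ, h3] at h1
    exact_mod_cast h1.symm
  subst hnn
  have hZρ := triv_transfer (blk p k F).ker ρ σ hρ.symm hZ
  have hUρ := avg_zero_transfer (dg p k F).ker ρ σ hρ.symm hU
  have hblk : ∀ x y, blk p k F x = blk p k F y →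
      (ρ x : Matrix (Fin n) (Fin n) ℂ) = ρ y := by
    intro x y hxy
    have hm : y⁻¹ * x ∈ (blk p k F).ker := by
      rw [MonoidHom.mem_ker, map_mul, hxy, ← map_mul, inv_mul_cancel, map_one]
    have h1 : ρ (y⁻¹ * x) = 1 := Units.ext (hZρ _ hm)
    rw [map_mul, map_inv, inv_mul_eq_one] at h1
    rw [h1]
  let r : F → Matrix (Fin n) (Fin n) ℂ := fun a => (ρ (uu p k F h2 hφ a))
  have r0 : r 0 = 1 := by simp [r, uu_zero]
  have radd : ∀ a b, r (a + b) = r a * r b := by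
    intro a b
    simp only [r]
    rw [hblk _ _ (blk_uu_mul p k F h2 hφ a b), map_mul, Units.val_mul]
  have rsum : ∑ a, r a = 0 := by
    have h1 := avg_mul_of (dg p k F).ker ρ (∑ a, r a) (by
      intro y hy
      rw [hblk _ _ (blk_uu p k F h2 hφ y hy)]
      change r _ * _ = _
      rw [Finset.mul_sum]
      simp_rw [← radd]
      exact Equiv.sum_comp (Equiv.addLeft (bm p k F y 0 1)) r)
    rw [hUρ, Matrix.zero_mul] at h1
    exact h1.symm
  have hm1 : quadraticChar F (-1) = 1 := by
    rw [quadraticChar_one_iff_isSquare (by simp), FiniteField.isSquare_neg_one_iff, hF]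
    have := (Nat.odd_iff.1 hqodd)
    have h4 : q % 4 = 1 ∨ q % 4 = 3 := by omega
    rcases h4 with h | h <;> simp [Nat.pow_mod, h]
  have hG := gauss_sq q hF hrc2 hm1 r r0 radd rsum
  set Gm := ∑ a, (quadraticChar F a : ℂ) • r a with hGm
  obtain ⟨s, hs⟩ := quadraticChar_exists_neg_one hrc2
  have hs0 : s ≠ 0 := by rintro rfl; simp at hs
  have hrneg : ∀ a, (r a)ᴴ * H = H * r (-a) := by
    intro a
    have h3 : r a * r (-a) = 1 := by rw [← radd, add_neg_cancel, r0]
    have h4 : (r a)ᴴ * H * r a = H := hinv _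
    calc (r a)ᴴ * H = (r a)ᴴ * H * (r a * r (-a)) := by rw [h3, Matrix.mul_one]
      _ = (r a)ᴴ * H * r a * r (-a) := by simp only [Matrix.mul_assoc]
      _ = H * r (-a) := by rw [h4]
  have hGH : Gmᴴ * H = H * Gm := by
    rw [hGm, Matrix.conjTranspose_sum, Finset.sum_mul, Finset.mul_sum,
      ← Equiv.sum_comp (Equiv.neg F)]
    refine Finset.sum_congr rfl fun a _ => ?_
    rw [Equiv.neg_apply, Matrix.conjTranspose_smul, Matrix.smul_mul, hrneg, neg_neg,
      Matrix.mul_smul, ← neg_one_mul a, map_mul, hm1, one_mul]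
    simp
  set gm := (ρ (hh p k F hφ s hs0) : Matrix (Fin n) (Fin n) ℂ) with hgm
  have hφs : iterateFrobenius F p k s ≠ 0 := by simpa using hs0
  have hgr : ∀ a, gm * r a = r (s * s / iterateFrobenius F p k s * a) * gm := by
    intro a
    have := hblk _ _ (blk_hh p k F h2 hφ s hs0 a)
    rw [map_mul, map_mul, Units.val_mul, Units.val_mul] at this
    rw [show s * s / iterateFrobenius F p k s * a = s * s * a / iterateFrobenius F p k s by ring]
    exact this
  have hc0 : s * s / iterateFrobenius F p k s ≠ 0 := div_ne_zero (mul_ne_zero hs0 hs0) hφs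
  have hηc : quadraticChar F (s * s / iterateFrobenius F p k s) = -1 := by
    have h5 : quadraticChar F (iterateFrobenius F p k s) = -1 := by
      rw [hφd, map_pow, hs, hqodd.neg_one_pow]
    have h6 : quadraticChar F (s * s / iterateFrobenius F p k s) *
        quadraticChar F (iterateFrobenius F p k s) = 1 := by
      rw [← map_mul, div_mul_cancel₀ _ hφs, map_mul, hs]; norm_num
    rw [h5] at h6
    linarith
  have hgG : gm * Gm = -(Gm * gm) := by
    rw [hGm, Finset.mul_sum, Finset.sum_mul,
      ← Equiv.sum_comp (Equiv.mulLeft₀ _ hc0) (fun a => (quadraticChar F a : ℂ) • r a * gm),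
      ← Finset.sum_neg_distrib]
    refine Finset.sum_congr rfl fun a _ => ?_
    rw [Equiv.mulLeft₀_apply, map_mul, hηc, Matrix.mul_smul, hgr, Matrix.smul_mul]
    simp
  have hLeq : charField (charOf σ) = charField (charOf ρ) := by rw [hρ]
  rw [hLeq] at hρL hHL ⊢
  obtain ⟨z, hz, hz0, hzd⟩ := final_disc (charField (charOf ρ)) (conj_closed ρ H hHdet hinv)
    H Gm gm hHL (by
      intro i j
      rw [hGm, Matrix.sum_apply]
      refine sum_mem fun a _ => ?_
      rw [Matrix.smul_apply, smul_eq_mul]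
      exact mul_mem (intCast_mem _ _) (hρL _ _ _)) (hρL _) hHH hHdet hGH (hinv _)
      ((Matrix.isUnit_iff_isUnit_det _).1 (Units.isUnit _)) q hqodd.pos.ne' hG hgG
  refine ⟨z, hz, hz0, ?_⟩
  have hsign : (-1 : ℂ) ^ (n * (n - 1) / 2) = 1 := by
    apply Even.neg_one_pow
    obtain ⟨m, rfl⟩ := h8
    rw [show 8 * m * (8 * m - 1) / 2 = 2 * (2 * m * (8 * m - 1)) from
      Nat.div_eq_of_eq_mul_right two_pos (by ring)]
    exact even_two_mul _
  rw [hsign, one_mul, one_mul, hzd]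

end Paper
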